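/- arXiv:1802.04033 — 2 statements merged into one kernel-verified Lean document; each statement's English description precedes it below -/
import Mathlib

section
/- Let V ⊆ ℂⁿ be open, let f be holomorphic on V, and let b_1, …, b_n be holomorphic on V × V such that for every ζ ∈ V there is r > 0 with f(z) − f(ζ) = Σ_{j=1}^n b_j(ζ,z)(z_j − ζ_j) for all z with ‖z − ζ‖ < r. Then for every ζ ∈ V and every multi-index α ∈ ℕⁿ with |α| ≥ 1, (1/α!) (∂^{|α|} f/∂ζ^α)(ζ) = Σ_{j : α_j ≥ 1} (α_j/α!) (∂_z^{α − e_j} b_j)(ζ,ζ), where ∂_z^β b_j denotes the partial derivative of b_j of multi-order β taken in the second (z) variable, e_j is the j-th standard multi-index, α! = α_1! ⋯ α_n! and |α| = α_1 + … + α_n. -/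
open Complex Set

noncomputable section

/-- Iterated complex directional derivative along a list of directions. -/
def dirDeriv {n : ℕ} (f : (Fin n → ℂ) → ℂ) : List (Fin n → ℂ) → (Fin n → ℂ) → ℂ
  | [], ζ => f ζ
  | v :: vs, ζ => fderiv ℂ (dirDeriv f vs) ζ v

/-- The complex partial derivative `∂^{|α|} f / ∂ζ^α` of multi-order `α`. -/
def mderiv {n : ℕ} (f : (Fin n → ℂ) → ℂ) (α : Fin n → ℕ) (ζ : Fin n → ℂ) : ℂ :=
  dirDeriv f ((List.finRange n).flatMap fun i => List.replicate (α i) (Pi.single i 1)) ζ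

theorem aux_bound {n : ℕ} {g : (Fin n → ℂ) → ℂ} {x : Fin n → ℂ} {ε C : ℝ} (hε : 0 < ε)
    (hC : 0 ≤ C)
    (hd : ∀ z ∈ Metric.ball x ε, DifferentiableAt ℂ g z ∧ ‖g z‖ ≤ C) :
    ∀ z ∈ Metric.ball x (ε / 2), ‖fderiv ℂ g z‖ ≤ 4 * C / ε := by
  intro z hz
  refine ContinuousLinearMap.opNorm_le_bound _ (by positivity) fun v => ?_
  rcases eq_or_ne v 0 with rfl | hv
  · simp
  have hv' : 0 < ‖v‖ := norm_pos_iff.2 hv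
  have hmem : ∀ w ∈ Metric.closedBall (0 : ℂ) (ε / (4 * ‖v‖)), z + w • v ∈ Metric.ball x ε := by
    intro w hw
    rw [mem_closedBall_zero_iff] at hw
    rw [mem_ball_iff_norm] at hz ⊢
    have h1 : ‖w • v‖ ≤ ε / 4 := by
      rw [norm_smul]
      calc ‖w‖ * ‖v‖ ≤ ε / (4 * ‖v‖) * ‖v‖ := by gcongr
        _ = ε / 4 := by field_simp
    calc ‖z + w • v - x‖ = ‖(z - x) + w • v‖ := by congr 1; abel
      _ ≤ ‖z - x‖ + ‖w • v‖ := norm_add_le _ _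
      _ < ε := by linarith
  have hR : 0 < ε / (4 * ‖v‖) := by positivity
  have hdiff : ∀ w ∈ Metric.closedBall (0 : ℂ) (ε / (4 * ‖v‖)),
      DifferentiableAt ℂ (fun w : ℂ => g (z + w • v)) w := by
    intro w hw
    have := (hd _ (hmem w hw)).1
    exact this.comp w (by fun_prop)
  have hder : deriv (fun w : ℂ => g (z + w • v)) 0 = fderiv ℂ g z v := by
    have hz' := (hd _ (hmem 0 (by simp [hR.le]))).1.hasFDerivAt
    have h2 : HasDerivAt (fun w : ℂ => z + w • v) v 0 := by
      simpa using ((hasDerivAt_id (0:ℂ)).smul_const v).const_add z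
    have := (hz'.comp_hasDerivAt (0:ℂ) h2).deriv
    simpa [Function.comp_def] using this
  rw [← hder]
  refine (Complex.norm_deriv_le_of_forall_mem_sphere_norm_le hR ?_ (C := C) ?_).trans ?_
  · refine DifferentiableOn.diffContOnCl fun w hw => (hdiff w ?_).differentiableWithinAt
    exact Metric.closure_ball_subset_closedBall hw
  · intro w hw
    exact (hd _ (hmem w (Metric.sphere_subset_closedBall hw))).2
  · apply le_of_eq; field_simp

theorem aux_diff {n : ℕ} {g : (Fin n → ℂ) → ℂ} {x : Fin n → ℂ}
    (hg : ∀ᶠ z in nhds x, DifferentiableAt ℂ g z) (v : Fin n → ℂ) :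
    DifferentiableAt ℂ (fun z => fderiv ℂ g z v) x := by
  have hb : ∀ᶠ z in nhds x, ‖g z‖ ≤ ‖g x‖ + 1 := by
    have := hg.self_of_nhds.continuousAt.norm
    exact (this.eventually (gt_mem_nhds (lt_add_one _))).mono fun z hz => le_of_lt hz
  obtain ⟨ε, hε, hd⟩ := Metric.eventually_nhds_iff_ball.1 (hg.and hb)
  have hbound := aux_bound hε (by positivity) hd
  set K := 4 * (‖g x‖ + 1) / ε
  set R := ε / (4 * (‖v‖ + 1)) with hRdef
  have hR : 0 < R := by positivity
  have hmem : ∀ z ∈ Metric.ball x (ε / 4), ∀ w ∈ Metric.closedBall (0 : ℂ) R,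
      z + w • v ∈ Metric.ball x (ε / 2) := by
    intro z hz w hw
    rw [mem_closedBall_zero_iff] at hw
    rw [mem_ball_iff_norm] at hz ⊢
    have h1 : ‖w • v‖ ≤ ε / 4 := by
      rw [norm_smul]
      calc ‖w‖ * ‖v‖ ≤ R * (‖v‖ + 1) := by gcongr; linarith
        _ = ε / 4 := by rw [hRdef]; field_simp
    calc ‖z + w • v - x‖ = ‖(z - x) + w • v‖ := by congr 1; abel
      _ ≤ ‖z - x‖ + ‖w • v‖ := norm_add_le _ _
      _ < ε / 2 := by linarith
  have hsub : Metric.ball x (ε / 2) ⊆ Metric.ball x ε := Metric.ball_subset_ball (by linarith)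
  let c : ℝ → ℂ := fun θ => deriv (circleMap 0 R) θ * ((circleMap 0 R θ) ^ 2)⁻¹
  have hc : Continuous c := by
    simp only [c, deriv_circleMap]
    refine Continuous.mul (by fun_prop) (Continuous.inv₀ (by fun_prop) fun θ => ?_)
    exact pow_ne_zero _ (by simp [hR.ne'])
  have hcm : ∀ θ, circleMap 0 R θ ∈ Metric.closedBall (0:ℂ) R := fun θ =>
    circleMap_mem_closedBall _ hR.le _
  have hformula : ∀ z ∈ Metric.ball x (ε / 4), fderiv ℂ g z v =
      (2 * Real.pi * I : ℂ)⁻¹ • ∫ θ in (0:ℝ)..2 * Real.pi, c θ • g (z + circleMap 0 R θ • v) := by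
    intro z hz
    have hU : IsOpen ((fun w : ℂ => z + w • v) ⁻¹' Metric.ball x ε) :=
      Metric.isOpen_ball.preimage (by fun_prop)
    have h := Complex.two_pi_I_inv_smul_circleIntegral_sub_sq_inv_smul_of_differentiable hU
      (c := 0) (w₀ := 0) (R := R) (f := fun w : ℂ => g (z + w • v))
      (fun w hw => hsub (hmem z hz w hw))
      (fun w hw => by
        have := (hd _ hw).1
        exact (DifferentiableAt.comp (f := fun w : ℂ => z + w • v) w this
          (by fun_prop)).differentiableWithinAt) (by simp [hR])
    have hz' := (hd _ (hsub (hmem z hz 0 (by simp [hR.le])))).1.hasFDerivAt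
    have h2 : HasDerivAt (fun w : ℂ => z + w • v) v 0 := by
      simpa using ((hasDerivAt_id (0:ℂ)).smul_const v).const_add z
    have h3 := (hz'.comp_hasDerivAt (0:ℂ) h2).deriv
    have h4 : deriv (fun w : ℂ => g (z + w • v)) 0 = fderiv ℂ g z v := by
      simpa [Function.comp_def] using h3
    rw [← h4, ← h]
    simp only [circleIntegral, c, sub_zero, smul_eq_mul, mul_assoc]
  have hcont : ∀ z ∈ Metric.ball x (ε / 4),
      Continuous fun θ => c θ • g (z + circleMap 0 R θ • v) := by
    intro z hz
    refine hc.smul (continuous_iff_continuousAt.2 fun θ => ?_)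
    have := (hd _ (hsub (hmem z hz _ (hcm θ)))).1.continuousAt
    exact ContinuousAt.comp (f := fun θ => z + circleMap 0 R θ • v) this (by fun_prop)
  have hnhds : Metric.ball x (ε / 4) ∈ nhds x := Metric.ball_mem_nhds _ (by positivity)
  have key := intervalIntegral.hasFDerivAt_integral_of_dominated_of_fderiv_le (𝕜 := ℂ)
    (μ := MeasureTheory.volume) (a := 0) (b := 2 * Real.pi) (x₀ := x)
    (F := fun z θ => c θ • g (z + circleMap 0 R θ • v))
    (F' := fun z θ => c θ • fderiv ℂ g (z + circleMap 0 R θ • v))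
    (bound := fun θ => ‖c θ‖ * K) hnhds
    (Filter.eventually_of_mem hnhds fun z hz => (hcont z hz).aestronglyMeasurable)
    ((hcont x (Metric.mem_ball_self (by positivity))).intervalIntegrable _ _)
    (by
      refine MeasureTheory.AEStronglyMeasurable.smul hc.aestronglyMeasurable ?_
      have h1 : Measurable (fun θ : ℝ => x + circleMap 0 R θ • v) :=
        Continuous.measurable (by fun_prop)
      exact ((measurable_fderiv ℂ g).comp h1).aestronglyMeasurable)
    (by
      refine Filter.Eventually.of_forall fun θ _ z hz => ?_
      rw [norm_smul]
      gcongr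
      exact hbound _ (hmem z hz _ (hcm θ)))
    (Continuous.intervalIntegrable (by fun_prop) _ _)
    (by
      refine Filter.Eventually.of_forall fun θ _ z hz => ?_
      have := (hd _ (hsub (hmem z hz _ (hcm θ)))).1.hasFDerivAt
      have h2 := this.comp z ((hasFDerivAt_id z).add_const (circleMap 0 R θ • v))
      exact h2.const_smul (c θ))
  have h5 := (key.differentiableAt.const_smul ((2 * Real.pi * I : ℂ)⁻¹))
  refine h5.congr_of_eventuallyEq ?_
  filter_upwards [hnhds] with z hz
  exact hformula z hz

theorem hol_dir {n : ℕ} {g : (Fin n → ℂ) → ℂ} {x : Fin n → ℂ}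
    (hg : ∀ᶠ z in nhds x, DifferentiableAt ℂ g z) (L : List (Fin n → ℂ)) :
    ∀ᶠ z in nhds x, DifferentiableAt ℂ (dirDeriv g L) z := by
  induction L with
  | nil => exact hg
  | cons v vs ih =>
    filter_upwards [eventually_eventually_nhds.2 ih] with z hz
    exact aux_diff hz v

theorem dir_congr {n : ℕ} {g h : (Fin n → ℂ) → ℂ} {x : Fin n → ℂ}
    (hg : g =ᶠ[nhds x] h) (L : List (Fin n → ℂ)) :
    dirDeriv g L =ᶠ[nhds x] dirDeriv h L := by
  induction L with
  | nil => exact hg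
  | cons v vs ih =>
    filter_upwards [ih.fderiv (𝕜 := ℂ)] with z hz
    simp only [dirDeriv, hz]

theorem dir_append {n : ℕ} (g : (Fin n → ℂ) → ℂ) (L M : List (Fin n → ℂ)) :
    dirDeriv g (L ++ M) = dirDeriv (dirDeriv g M) L := by
  induction L with
  | nil => rfl
  | cons v vs ih =>
    funext z
    simp only [List.cons_append, dirDeriv, ih]

theorem dir_const_add {n : ℕ} (g : (Fin n → ℂ) → ℂ) (c : ℂ) (L : List (Fin n → ℂ))
    (hL : L ≠ []) : dirDeriv (fun z => c + g z) L = dirDeriv g L := by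
  induction L with
  | nil => exact absurd rfl hL
  | cons v vs ih =>
    funext z
    rcases vs with _ | ⟨w, ws⟩
    · have h1 : dirDeriv (fun z => c + g z) [] = fun z => c + g z := rfl
      have h2 : dirDeriv g [] = g := rfl
      simp only [dirDeriv.eq_2, h1, h2, fderiv_const_add]
    · rw [dirDeriv.eq_2, dirDeriv.eq_2, ih (by simp)]

theorem dir_add {n : ℕ} {g h : (Fin n → ℂ) → ℂ} {x : Fin n → ℂ}
    (hg : ∀ᶠ z in nhds x, DifferentiableAt ℂ g z)
    (hh : ∀ᶠ z in nhds x, DifferentiableAt ℂ h z) (L : List (Fin n → ℂ)) :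
    dirDeriv (fun z => g z + h z) L =ᶠ[nhds x] fun z => dirDeriv g L z + dirDeriv h L z := by
  induction L with
  | nil => exact Filter.EventuallyEq.rfl
  | cons v vs ih =>
    filter_upwards [ih.fderiv (𝕜 := ℂ), hol_dir hg vs, hol_dir hh vs] with z hz h1 h2
    simp only [dirDeriv, hz]
    rw [fderiv_fun_add h1 h2]
    rfl

theorem dir_zero {n : ℕ} (L : List (Fin n → ℂ)) :
    dirDeriv (fun _ : Fin n → ℂ => (0 : ℂ)) L = fun _ => 0 := by
  induction L with
  | nil => rfl
  | cons v vs ih => funext z; simp [dirDeriv, ih]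

theorem dir_sum {n : ℕ} {ι : Type*} (s : Finset ι) {g : ι → (Fin n → ℂ) → ℂ} {x : Fin n → ℂ}
    (hg : ∀ i, ∀ᶠ z in nhds x, DifferentiableAt ℂ (g i) z) (L : List (Fin n → ℂ)) :
    dirDeriv (fun z => ∑ i ∈ s, g i z) L x = ∑ i ∈ s, dirDeriv (g i) L x := by
  classical
  induction s using Finset.induction_on with
  | empty => simp [dir_zero]
  | insert a s ha ih =>
    simp only [Finset.sum_insert ha]
    rw [← ih]
    refine (dir_add (hg a) ?_ L).self_of_nhds
    filter_upwards [(Filter.eventually_all_finset s).2 fun i _ => hg i] with z hz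
    exact DifferentiableAt.fun_sum hz

theorem dir_const_mul {n : ℕ} (c : ℂ) (g : (Fin n → ℂ) → ℂ) {x : Fin n → ℂ}
    (hg : ∀ᶠ z in nhds x, DifferentiableAt ℂ g z) (L : List (Fin n → ℂ)) :
    dirDeriv (fun z => c * g z) L =ᶠ[nhds x] fun z => c * dirDeriv g L z := by
  induction L with
  | nil => exact Filter.EventuallyEq.rfl
  | cons v vs ih =>
    filter_upwards [ih.fderiv (𝕜 := ℂ), hol_dir hg vs] with z hz h1
    simp only [dirDeriv, hz]
    rw [fderiv_const_mul h1]
    rfl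

theorem fderiv_mul_coord {n : ℕ} {g : (Fin n → ℂ) → ℂ} {z : Fin n → ℂ}
    (hg : DifferentiableAt ℂ g z) (j : Fin n) (a : ℂ) (v : Fin n → ℂ) :
    fderiv ℂ (fun z => g z * (z j - a)) z v = fderiv ℂ g z v * (z j - a) + v j * g z := by
  have h1 : HasFDerivAt (fun z : Fin n → ℂ => z j - a)
      (ContinuousLinearMap.proj (R := ℂ) (φ := fun _ : Fin n => ℂ) j) z :=
    (ContinuousLinearMap.proj (R := ℂ) (φ := fun _ : Fin n => ℂ) j).hasFDerivAt.sub_const a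
  rw [HasFDerivAt.fderiv (f := fun z => g z * (z j - a)) (hg.hasFDerivAt.mul h1)]
  simp
  ring

theorem dir_mul_coord {n : ℕ} {g : (Fin n → ℂ) → ℂ} {x : Fin n → ℂ}
    (hg : ∀ᶠ z in nhds x, DifferentiableAt ℂ g z) (j : Fin n) (a : ℂ) (L : List (Fin n → ℂ))
    (hL : ∀ v ∈ L, v j = 0) :
    dirDeriv (fun z => g z * (z j - a)) L =ᶠ[nhds x] fun z => dirDeriv g L z * (z j - a) := by
  induction L with
  | nil => exact Filter.EventuallyEq.rfl
  | cons v vs ih =>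
    filter_upwards [(ih fun v hv => hL v (by simp [hv])).fderiv (𝕜 := ℂ), hol_dir hg vs]
      with z hz h1
    simp only [dirDeriv, hz]
    rw [fderiv_mul_coord h1, hL v (by simp)]
    ring

theorem dir_mul_rep {n : ℕ} {g : (Fin n → ℂ) → ℂ} {x : Fin n → ℂ}
    (hg : ∀ᶠ z in nhds x, DifferentiableAt ℂ g z) (j : Fin n) (a : ℂ) (m : ℕ)
    (v : Fin n → ℂ) (hv : v j = 1) :
    dirDeriv (fun z => g z * (z j - a)) (List.replicate m v) =ᶠ[nhds x]
      fun z => dirDeriv g (List.replicate m v) z * (z j - a)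
        + (m : ℂ) * dirDeriv g (List.replicate (m - 1) v) z := by
  induction m with
  | zero => simp [dirDeriv]
  | succ m ih =>
    filter_upwards [ih.fderiv (𝕜 := ℂ), hol_dir hg (List.replicate m v),
      hol_dir hg (List.replicate (m - 1) v)] with z hz h1 h2
    have h3 : DifferentiableAt ℂ
        (fun z => dirDeriv g (List.replicate m v) z * (z j - a)) z :=
      h1.mul (by fun_prop)
    simp only [List.replicate_succ, dirDeriv, hz, Nat.add_sub_cancel]
    rw [fderiv_fun_add h3 (h2.const_mul _), add_apply,
      fderiv_mul_coord h1, fderiv_const_mul h2, hv]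
    rcases m with _ | m
    · simp
    · simp only [List.replicate_succ, dirDeriv, Nat.add_sub_cancel]
      simp only [smul_apply, smul_eq_mul]
      push_cast
      ring

theorem dir_main {n : ℕ} {g : (Fin n → ℂ) → ℂ} {x : Fin n → ℂ}
    (hg : ∀ᶠ z in nhds x, DifferentiableAt ℂ g z) (j : Fin n) (m : ℕ)
    (v : Fin n → ℂ) (hv : v j = 1) (A B : List (Fin n → ℂ))
    (hA : ∀ v ∈ A, v j = 0) (hB : ∀ v ∈ B, v j = 0) :
    dirDeriv (fun z => g z * (z j - x j)) (A ++ (List.replicate m v ++ B)) x =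
      (m : ℂ) * dirDeriv g (A ++ (List.replicate (m - 1) v ++ B)) x := by
  simp only [dir_append]
  have hgB := hol_dir hg B
  have e1 := (dir_congr (dir_mul_coord hg j (x j) B hB) (List.replicate m v)).trans
    (dir_mul_rep hgB j (x j) m v hv)
  have h1 := hol_dir hgB (List.replicate m v)
  have h2 := hol_dir hgB (List.replicate (m - 1) v)
  have h3 : ∀ᶠ z in nhds x, DifferentiableAt ℂ
      (fun z => dirDeriv (dirDeriv g B) (List.replicate m v) z * (z j - x j)) z :=
    h1.mono fun z hz => hz.mul (by fun_prop)
  have e2 := (dir_congr e1 A).trans (dir_add h3 (h2.mono fun z hz => hz.const_mul (m : ℂ)) A)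
  rw [e2.self_of_nhds]
  beta_reduce
  rw [(dir_mul_coord h1 j (x j) A hA).self_of_nhds,
    (dir_const_mul (m : ℂ) _ h2 A).self_of_nhds]
  simp

theorem mderiv_main {n : ℕ} {g : (Fin n → ℂ) → ℂ} {x : Fin n → ℂ}
    (hg : ∀ᶠ z in nhds x, DifferentiableAt ℂ g z) (j : Fin n) (α : Fin n → ℕ) :
    mderiv (fun z => g z * (z j - x j)) α x =
      (α j : ℂ) * mderiv g (fun i => α i - if i = j then 1 else 0) x := by
  obtain ⟨s, t, hst⟩ := List.append_of_mem (List.mem_finRange j)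
  have hnd := List.nodup_finRange n
  rw [hst] at hnd
  have hs : ∀ i ∈ s, i ≠ j := by
    rintro i hi rfl
    simp [List.nodup_append] at hnd
    grind
  have ht : ∀ i ∈ t, i ≠ j := by
    rintro i hi rfl
    simp [List.nodup_append] at hnd
    grind
  have hcong : ∀ l : List (Fin n), (∀ i ∈ l, i ≠ j) →
      (l.flatMap fun i => List.replicate (α i - if i = j then 1 else 0)
        (Pi.single i 1 : Fin n → ℂ)) =
      l.flatMap fun i => List.replicate (α i) (Pi.single i 1 : Fin n → ℂ) := by
    intro l hl
    refine List.flatMap_congr fun i hi => ?_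
    simp [hl i hi]
  have hz : ∀ l : List (Fin n), (∀ i ∈ l, i ≠ j) →
      ∀ v ∈ (l.flatMap fun i => List.replicate (α i) (Pi.single i 1 : Fin n → ℂ)), v j = 0 := by
    intro l hl v hv
    obtain ⟨i, hi, hv⟩ := List.mem_flatMap.1 hv
    rw [List.eq_of_mem_replicate hv]
    simp [(hl i hi).symm]
  unfold mderiv
  rw [hst]
  simp only [List.flatMap_append, List.flatMap_cons]
  rw [hcong s hs, hcong t ht, if_pos trivial]
  exact dir_main hg j (α j) _ (by simp) _ _ (hz s hs) (hz t ht)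

theorem statement5 {n : ℕ}
    (V : Set (Fin n → ℂ)) (hV : IsOpen V)
    (f : (Fin n → ℂ) → ℂ) (hf : DifferentiableOn ℂ f V)
    (b : Fin n → ((Fin n → ℂ) × (Fin n → ℂ)) → ℂ)
    (hb : ∀ j, DifferentiableOn ℂ (b j) (V ×ˢ V))
    (hdecomp : ∀ ζ ∈ V, ∃ r : ℝ, 0 < r ∧ ∀ z : Fin n → ℂ, ‖z - ζ‖ < r →
      f z - f ζ = ∑ j, b j (ζ, z) * (z j - ζ j)) :
    ∀ ζ ∈ V, ∀ α : Fin n → ℕ, 1 ≤ ∑ i, α i →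
      ((∏ i, Nat.factorial (α i) : ℕ) : ℂ)⁻¹ * mderiv f α ζ =
        ∑ j ∈ Finset.univ.filter (fun j => 1 ≤ α j),
          ((α j : ℂ) / ((∏ i, Nat.factorial (α i) : ℕ) : ℂ)) *
            mderiv (fun z => b j (ζ, z)) (fun i => α i - if i = j then 1 else 0) ζ := by
  intro ζ hζ α hα
  obtain ⟨r, hr, hdec⟩ := hdecomp ζ hζ
  have hbj : ∀ j, ∀ᶠ z in nhds ζ, DifferentiableAt ℂ (fun z => b j (ζ, z)) z := by
    intro j
    filter_upwards [hV.mem_nhds hζ] with z hz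
    have h1 := (hb j).differentiableAt ((hV.prod hV).mem_nhds (Set.mk_mem_prod hζ hz))
    exact DifferentiableAt.comp (f := fun z : Fin n → ℂ => (ζ, z)) z h1 (by fun_prop)
  have hfe : f =ᶠ[nhds ζ] fun z => f ζ + ∑ j, b j (ζ, z) * (z j - ζ j) := by
    filter_upwards [Metric.ball_mem_nhds ζ hr] with z hz
    rw [← hdec z (mem_ball_iff_norm.1 hz)]
    ring
  have hne : ((List.finRange n).flatMap fun i =>
      List.replicate (α i) (Pi.single i 1 : Fin n → ℂ)) ≠ [] := by
    intro h
    rw [List.flatMap_eq_nil_iff] at h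
    have : ∑ i, α i = 0 := Finset.sum_eq_zero fun i _ => by
      simpa using h i (List.mem_finRange i)
    omega
  have hm : mderiv f α ζ = ∑ j, (α j : ℂ) *
      mderiv (fun z => b j (ζ, z)) (fun i => α i - if i = j then 1 else 0) ζ := by
    have h1 : mderiv f α ζ = mderiv (fun z => f ζ + ∑ j, b j (ζ, z) * (z j - ζ j)) α ζ :=
      (dir_congr hfe _).self_of_nhds
    rw [h1]
    unfold mderiv
    rw [dir_const_add _ _ _ hne, dir_sum _ (g := fun j z => b j (ζ, z) * (z j - ζ j))
      fun j => (hbj j).mono fun z hz => hz.mul (by fun_prop)]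
    exact Finset.sum_congr rfl fun j _ => mderiv_main (hbj j) j α
  rw [hm, Finset.mul_sum, Finset.sum_filter]
  refine Finset.sum_congr rfl fun j _ => ?_
  split_ifs with h
  · rw [div_eq_mul_inv]; ring
  · have : α j = 0 := by omega
    simp [this]
end
end

section
/- Let ρ be a real-valued C^∞ function on an open set U ⊆ ℂⁿ which is strictly plurisubharmonic on U, and let K ⊆ U be compact. Define the Levi polynomial F(ζ,z) = Σ_{j=1}^n (∂ρ/∂ζ_j)(ζ)(z_j − ζ_j) + (1/2) Σ_{j,k=1}^n (∂²ρ/∂ζ_j∂ζ_k)(ζ)(z_j − ζ_j)(z_k − ζ_k). Then there exist β > 0 and ε > 0 such that for all ζ ∈ K and all z ∈ U with ‖ζ − z‖ < ε, 2 Re F(ζ,z) ≤ ρ(z) − ρ(ζ) − 2β ‖ζ − z‖². -/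
open Complex Set

noncomputable section

/-- The Wirtinger `(1,0)`-derivative of a real-valued function `ρ` at `p`
in the direction `v`, i.e. `∑ⱼ ∂ρ/∂zⱼ(p) vⱼ`. -/
def wder {n : ℕ} (ρ : EuclideanSpace ℂ (Fin n) → ℝ) (p v : EuclideanSpace ℂ (Fin n)) : ℂ :=
  (1 / 2 : ℂ) * ((fderiv ℝ ρ p v : ℂ) - Complex.I * (fderiv ℝ ρ p (Complex.I • v) : ℂ))

/-- The Wirtinger `(1,0)`-derivative of a complex-valued function. -/
def wderC {n : ℕ} (g : EuclideanSpace ℂ (Fin n) → ℂ) (p v : EuclideanSpace ℂ (Fin n)) : ℂ :=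
  (1 / 2 : ℂ) * (fderiv ℝ g p v - Complex.I * fderiv ℝ g p (Complex.I • v))

/-- The Levi form of `ρ` at `p` in direction `v`:
`∑_{j,k} ∂²ρ/∂zⱼ∂z̄ₖ(p) vⱼ conj(vₖ) = (Hess ρ(v,v) + Hess ρ(iv,iv))/4`. -/
def leviForm {n : ℕ} (ρ : EuclideanSpace ℂ (Fin n) → ℝ) (p v : EuclideanSpace ℂ (Fin n)) : ℝ :=
  (1 / 4) * (iteratedFDeriv ℝ 2 ρ p ![v, v] +
    iteratedFDeriv ℝ 2 ρ p ![Complex.I • v, Complex.I • v])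

/-- The Levi polynomial
`F(ζ,z) = ∑ⱼ ∂ρ/∂ζⱼ(ζ)(zⱼ−ζⱼ) + (1/2) ∑_{j,k} ∂²ρ/∂ζⱼ∂ζₖ(ζ)(zⱼ−ζⱼ)(zₖ−ζₖ)`. -/
def leviPoly {n : ℕ} (ρ : EuclideanSpace ℂ (Fin n) → ℝ)
    (ζ z : EuclideanSpace ℂ (Fin n)) : ℂ :=
  (∑ j, wder ρ ζ (EuclideanSpace.single j (1 : ℂ)) * (z j - ζ j)) +
  (1 / 2 : ℂ) * ∑ j, ∑ k,
    wderC (fun w => wder ρ w (EuclideanSpace.single k (1 : ℂ))) ζ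
        (EuclideanSpace.single j (1 : ℂ)) *
      (z j - ζ j) * (z k - ζ k)
lemma aux_decomp {n : ℕ} (w : EuclideanSpace ℂ (Fin n)) :
    w = ∑ j, w j • EuclideanSpace.single j (1 : ℂ) := by
  ext i
  simp [Finset.sum_apply, Pi.single_apply]

lemma aux_lin {n : ℕ} (D : EuclideanSpace ℂ (Fin n) →ₗ[ℝ] ℂ) (w : EuclideanSpace ℂ (Fin n)) :
    ∑ j, ((1 / 2 : ℂ) * (D (EuclideanSpace.single j (1 : ℂ)) -
      Complex.I * D (Complex.I • EuclideanSpace.single j (1 : ℂ)))) * w j =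
    (1 / 2 : ℂ) * (D w - Complex.I * D (Complex.I • w)) := by
  have key : ∀ (c : ℂ) (e : EuclideanSpace ℂ (Fin n)),
      D (c • e) = c.re * D e + c.im * D (Complex.I • e) := by
    intro c e
    have : c • e = c.re • e + c.im • (Complex.I • e) := by
      rw [← Complex.coe_smul, ← Complex.coe_smul, smul_smul, ← add_smul, Complex.re_add_im]
    rw [this, map_add, map_smul, map_smul]
    simp
  have h1 : D w = ∑ j, D (w j • EuclideanSpace.single j (1 : ℂ)) := by
    conv_lhs => rw [aux_decomp w]
    rw [map_sum]
  have h2 : D (Complex.I • w) = ∑ j, D ((Complex.I * w j) • EuclideanSpace.single j (1 : ℂ)) := by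
    conv_lhs => rw [aux_decomp w]
    rw [Finset.smul_sum, map_sum]
    simp only [smul_smul]
  rw [h1, h2, Finset.mul_sum, ← Finset.sum_sub_distrib, Finset.mul_sum]
  refine Finset.sum_congr rfl fun j _ => ?_
  rw [key (w j), key (Complex.I * w j)]
  generalize D (EuclideanSpace.single j (1 : ℂ)) = A
  generalize D (Complex.I • EuclideanSpace.single j (1 : ℂ)) = B
  generalize w j = c
  apply Complex.ext <;> simp <;> ring

lemma aux_poly {n : ℕ} (ρ : EuclideanSpace ℂ (Fin n) → ℝ) (ζ z : EuclideanSpace ℂ (Fin n))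
    (hd : DifferentiableAt ℝ (fderiv ℝ ρ) ζ) :
    2 * (leviPoly ρ ζ z).re = fderiv ℝ ρ ζ (z - ζ) +
      (1 / 2) * fderiv ℝ (fderiv ℝ ρ) ζ (z - ζ) (z - ζ) - leviForm ρ ζ (z - ζ) := by
  set H := fderiv ℝ (fderiv ℝ ρ) ζ with hH
  set w := z - ζ with hw
  have hwj : ∀ j, z j - ζ j = w j := fun j => by simp [hw]
  have hder : ∀ e v : EuclideanSpace ℂ (Fin n), fderiv ℝ (fun p => wder ρ p e) ζ v =
      (1 / 2 : ℂ) * ((H v e : ℂ) - Complex.I * (H v (Complex.I • e) : ℂ)) := by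
    intro e v
    have hD : HasFDerivAt (fderiv ℝ ρ) H ζ := hd.hasFDerivAt
    have h1 : ∀ u, HasFDerivAt (fun p => ((fderiv ℝ ρ p u : ℝ) : ℂ))
        (Complex.ofRealCLM.comp (((ContinuousLinearMap.apply ℝ ℝ u)).comp H)) ζ := by
      intro u
      exact (Complex.ofRealCLM.comp (ContinuousLinearMap.apply ℝ ℝ u)).hasFDerivAt.comp ζ hD
    have h2 := ((h1 e).sub ((h1 (Complex.I • e)).const_mul Complex.I)).const_mul (1 / 2 : ℂ)
    have h3 : fderiv ℝ (fun p => wder ρ p e) ζ = _ := h2.fderiv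
    rw [h3]
    simp
  have hS1 : ∑ j, wder ρ ζ (EuclideanSpace.single j (1 : ℂ)) * w j =
      (1 / 2 : ℂ) * ((fderiv ℝ ρ ζ w : ℂ) - Complex.I * (fderiv ℝ ρ ζ (Complex.I • w) : ℂ)) :=
    aux_lin (Complex.ofRealCLM.comp (fderiv ℝ ρ ζ)).toLinearMap w
  have hk : ∀ v, ∑ k, fderiv ℝ (fun p => wder ρ p (EuclideanSpace.single k (1 : ℂ))) ζ v * w k =
      (1 / 2 : ℂ) * ((H v w : ℂ) - Complex.I * (H v (Complex.I • w) : ℂ)) := by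
    intro v
    simp only [hder]
    exact aux_lin (Complex.ofRealCLM.comp (H v)).toLinearMap w
  let G : EuclideanSpace ℂ (Fin n) →ₗ[ℝ] ℂ :=
    ∑ k, ((LinearMap.mulRight ℝ (w k)).comp
      (fderiv ℝ (fun p => wder ρ p (EuclideanSpace.single k (1 : ℂ))) ζ).toLinearMap)
  have hG : ∀ v, G v =
      ∑ k, fderiv ℝ (fun p => wder ρ p (EuclideanSpace.single k (1 : ℂ))) ζ v * w k := by
    intro v
    simp [G]
  have hS2 : ∑ j, ∑ k, wderC (fun p => wder ρ p (EuclideanSpace.single k (1 : ℂ))) ζ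
        (EuclideanSpace.single j (1 : ℂ)) * w j * w k =
      (1 / 2 : ℂ) * (G w - Complex.I * G (Complex.I • w)) := by
    rw [← aux_lin G w]
    refine Finset.sum_congr rfl fun j _ => ?_
    rw [hG, hG, Finset.mul_sum, ← Finset.sum_sub_distrib, Finset.mul_sum, Finset.sum_mul]
    refine Finset.sum_congr rfl fun k _ => ?_
    rw [wderC]
    ring
  have hL : leviForm ρ ζ w = (1 / 4) * (H w w + H (Complex.I • w) (Complex.I • w)) := by
    simp [leviForm, iteratedFDeriv_two_apply, hH]
  rw [leviPoly]
  simp only [hwj]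
  rw [hS1, hS2, hG, hG, hk, hk, hL]
  simp
  ring

lemma aux_taylor {n : ℕ} (ρ : EuclideanSpace ℂ (Fin n) → ℝ) (ζ z : EuclideanSpace ℂ (Fin n))
    (η ε : ℝ) (hz : ‖z - ζ‖ < ε)
    (hρ : ∀ x ∈ Metric.ball ζ ε, ContDiffAt ℝ 2 ρ x)
    (hη : ∀ x ∈ Metric.ball ζ ε,
      ‖fderiv ℝ (fderiv ℝ ρ) x - fderiv ℝ (fderiv ℝ ρ) ζ‖ ≤ η) :
    |ρ z - ρ ζ - fderiv ℝ ρ ζ (z - ζ) -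
      (1 / 2) * fderiv ℝ (fderiv ℝ ρ) ζ (z - ζ) (z - ζ)| ≤ η * ‖z - ζ‖ ^ 2 := by
  have hε : 0 < ε := (norm_nonneg _).trans_lt hz
  have hζ : ζ ∈ Metric.ball ζ ε := Metric.mem_ball_self hε
  have hη0 : 0 ≤ η := le_trans (by positivity) (hη ζ hζ)
  set H := fderiv ℝ (fderiv ℝ ρ) ζ with hH
  have hsymm : IsSymmSndFDerivAt ℝ ρ ζ := (hρ ζ hζ).isSymmSndFDerivAt (by simp)
  have hD2 : ∀ x ∈ Metric.ball ζ ε, DifferentiableAt ℝ (fderiv ℝ ρ) x := fun x hx =>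
    ((hρ x hx).fderiv_right (m := 1) (by norm_num)).differentiableAt (by norm_num)
  have hD1 : ∀ x ∈ Metric.ball ζ ε, DifferentiableAt ℝ ρ x := fun x hx =>
    (hρ x hx).differentiableAt (by norm_num)
  have step1 : ∀ x ∈ Metric.ball ζ ε,
      ‖fderiv ℝ ρ x - fderiv ℝ ρ ζ - H (x - ζ)‖ ≤ η * ‖x - ζ‖ := by
    intro x hx
    have := (convex_ball ζ ε).norm_image_sub_le_of_norm_hasFDerivWithin_le
      (f := fun y => fderiv ℝ ρ y - H y) (f' := fun y => fderiv ℝ (fderiv ℝ ρ) y - H) (C := η)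
      (fun y hy => ((hD2 y hy).hasFDerivAt.sub H.hasFDerivAt).hasFDerivWithinAt) hη hζ hx
    have he : fderiv ℝ ρ x - fderiv ℝ ρ ζ - H (x - ζ) =
        (fderiv ℝ ρ x - H x) - (fderiv ℝ ρ ζ - H ζ) := by
      rw [map_sub]
      abel
    rw [he]
    exact this
  set r := ‖z - ζ‖ with hr
  have hsub : ∀ y ∈ Metric.closedBall ζ r, y ∈ Metric.ball ζ ε := fun y hy =>
    Metric.closedBall_subset_ball hz hy
  have hφ : ∀ y ∈ Metric.closedBall ζ r, HasFDerivWithinAt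
      (fun y => ρ y - fderiv ℝ ρ ζ y - (1 / 2) * H (y - ζ) (y - ζ))
      (fderiv ℝ ρ y - fderiv ℝ ρ ζ - H (y - ζ)) (Metric.closedBall ζ r) y := by
    intro y hy
    have hs : HasFDerivAt (fun y : EuclideanSpace ℂ (Fin n) => y - ζ)
      (ContinuousLinearMap.id ℝ _) y := (hasFDerivAt_id y).sub_const ζ
    have hq := ((H.hasFDerivAt.comp y hs).clm_apply hs).const_mul (1 / 2 : ℝ)
    have := (((hD1 y (hsub y hy)).hasFDerivAt.sub (fderiv ℝ ρ ζ).hasFDerivAt).sub hq)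
    refine HasFDerivAt.hasFDerivWithinAt (HasFDerivAt.congr_fderiv this ?_)
    ext v
    have hs' : H v (y - ζ) = H (y - ζ) v := hsymm v (y - ζ)
    simp only [_root_.sub_apply, _root_.smul_apply,
      _root_.add_apply, ContinuousLinearMap.comp_apply,
      ContinuousLinearMap.flip_apply, ContinuousLinearMap.id_apply, Function.comp_apply,
      smul_eq_mul, hs']
    ring
  have hfin := (convex_closedBall ζ r).norm_image_sub_le_of_norm_hasFDerivWithin_le
    (C := η * r) hφ
    (fun y hy => (step1 y (hsub y hy)).trans (by
      have : ‖y - ζ‖ ≤ r := by simpa [dist_eq_norm] using hy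
      gcongr))
    (Metric.mem_closedBall_self (norm_nonneg _))
    (show z ∈ Metric.closedBall ζ r by simp [dist_eq_norm, hr])
  rw [Real.norm_eq_abs] at hfin
  calc _ = _ := by
        congr 1
        simp only [map_sub, sub_self, map_zero, mul_zero, sub_zero]
        ring
    _ ≤ _ := hfin
    _ = _ := by rw [← hr]; ring

lemma aux_unif {E F : Type*} [NormedAddCommGroup E] [NormedAddCommGroup F]
    (K : Set E) (hK : IsCompact K) (f : E → F) (hf : ∀ a ∈ K, ContinuousAt f a)
    (c : ℝ) (hc : 0 < c) :
    ∃ ε : ℝ, 0 < ε ∧ ∀ ζ ∈ K, ∀ x, dist ζ x < ε → ‖f x - f ζ‖ ≤ c := by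
  have huc := hK.uniformContinuousAt_of_continuousAt f hf (Metric.dist_mem_uniformity hc)
  obtain ⟨ε, hε, hεb⟩ := Metric.mem_uniformity_dist.1 huc
  refine ⟨ε, hε, fun ζ hζ x hx => ?_⟩
  have h2 := hεb hx hζ
  simp only [mem_setOf_eq] at h2
  rw [dist_comm, dist_eq_norm] at h2
  exact h2.le

lemma aux_levi {n : ℕ} (U : Set (EuclideanSpace ℂ (Fin n)))
    (ρ : EuclideanSpace ℂ (Fin n) → ℝ)
    (hc : ContinuousOn (fderiv ℝ (fderiv ℝ ρ)) U)
    (hpsh : ∀ p ∈ U, ∀ v, v ≠ 0 → 0 < leviForm ρ p v)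
    (K : Set (EuclideanSpace ℂ (Fin n))) (hK : IsCompact K) (hKU : K ⊆ U) :
    ∃ c : ℝ, 0 < c ∧ ∀ ζ ∈ K, ∀ w, c * ‖w‖ ^ 2 ≤ leviForm ρ ζ w := by
  have hL : ∀ p w, leviForm ρ p w = (1 / 4) * (fderiv ℝ (fderiv ℝ ρ) p w w +
      fderiv ℝ (fderiv ℝ ρ) p (Complex.I • w) (Complex.I • w)) := by
    intro p w
    simp [leviForm, iteratedFDeriv_two_apply]
  have hcont : ContinuousOn (fun q : EuclideanSpace ℂ (Fin n) × EuclideanSpace ℂ (Fin n) =>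
      leviForm ρ q.1 q.2) (K ×ˢ Metric.sphere 0 1) := by
    simp only [hL]
    have h1 : ContinuousOn (fun q : EuclideanSpace ℂ (Fin n) × EuclideanSpace ℂ (Fin n) =>
        fderiv ℝ (fderiv ℝ ρ) q.1) (K ×ˢ Metric.sphere 0 1) :=
      hc.comp continuousOn_fst (fun q hq => hKU hq.1)
    have h2 : ContinuousOn (fun q : EuclideanSpace ℂ (Fin n) × EuclideanSpace ℂ (Fin n) =>
        Complex.I • q.2) (K ×ˢ Metric.sphere 0 1) :=
      Continuous.continuousOn (by fun_prop)
    exact continuousOn_const.mul (((h1.clm_apply continuousOn_snd).clm_apply continuousOn_snd).add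
      ((h1.clm_apply h2).clm_apply h2))
  obtain ⟨c, hc0, hcb⟩ := (hK.prod (isCompact_sphere (0 : EuclideanSpace ℂ (Fin n)) 1)).exists_forall_le'
    hcont (a := 0) (fun q hq => hpsh q.1 (hKU hq.1) q.2 (by
      have := hq.2
      rintro h
      simp [h] at this))
  refine ⟨c, hc0, fun ζ hζ w => ?_⟩
  by_cases hw : w = 0
  · simp [hw, hL]
  have hw' : ‖w‖ ≠ 0 := norm_ne_zero_iff.mpr hw
  have h := hcb (ζ, ‖w‖⁻¹ • w) ⟨hζ, by simp [norm_smul, hw']⟩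
  have hww : w = ‖w‖ • (‖w‖⁻¹ • w) := by rw [smul_smul, mul_inv_cancel₀ hw', one_smul]
  have hsc : ∀ (t : ℝ) (u : EuclideanSpace ℂ (Fin n)),
      leviForm ρ ζ (t • u) = t ^ 2 * leviForm ρ ζ u := by
    intro t u
    rw [hL, hL, smul_comm Complex.I t u]
    simp only [map_smul, _root_.smul_apply, smul_eq_mul]
    ring
  calc c * ‖w‖ ^ 2 ≤ leviForm ρ ζ (‖w‖⁻¹ • w) * ‖w‖ ^ 2 := by gcongr
    _ = leviForm ρ ζ (‖w‖ • (‖w‖⁻¹ • w)) := by rw [hsc ‖w‖]; ring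
    _ = _ := by rw [← hww]


theorem statement15 {n : ℕ}
    (U : Set (EuclideanSpace ℂ (Fin n))) (hU : IsOpen U)
    (ρ : EuclideanSpace ℂ (Fin n) → ℝ) (hρ : ContDiffOn ℝ (⊤ : ℕ∞) ρ U)
    (hpsh : ∀ p ∈ U, ∀ v, v ≠ 0 → 0 < leviForm ρ p v)
    (K : Set (EuclideanSpace ℂ (Fin n))) (hK : IsCompact K) (hKU : K ⊆ U) :
    ∃ β : ℝ, 0 < β ∧ ∃ ε : ℝ, 0 < ε ∧
      ∀ ζ ∈ K, ∀ z ∈ U, ‖ζ - z‖ < ε →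
        2 * (leviPoly ρ ζ z).re ≤ ρ z - ρ ζ - 2 * β * ‖ζ - z‖ ^ 2 := by
  have hC : ∀ x ∈ U, ContDiffAt ℝ 2 ρ x := fun x hx =>
    (hρ.contDiffAt (hU.mem_nhds hx)).of_le (by
      have : ((2 : ℕ∞) : WithTop ℕ∞) ≤ ((⊤ : ℕ∞) : WithTop ℕ∞) := WithTop.coe_le_coe.2 le_top
      exact this)
  have hH : ∀ x ∈ U, ContDiffAt ℝ 1 (fderiv ℝ ρ) x := fun x hx =>
    (hC x hx).fderiv_right (m := 1) (by norm_num)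
  have hHc : ∀ x ∈ U, ContinuousAt (fderiv ℝ (fderiv ℝ ρ)) x := fun x hx =>
    ((hH x hx).fderiv_right (m := 0) (by norm_num)).continuousAt
  obtain ⟨c, hc, hcb⟩ := aux_levi U ρ (fun x hx => (hHc x hx).continuousWithinAt) hpsh K hK hKU
  obtain ⟨δ, hδ, hδU⟩ := hK.exists_thickening_subset_open hU hKU
  obtain ⟨ε, hε, hεb⟩ := aux_unif K hK (fderiv ℝ (fderiv ℝ ρ))
    (fun a ha => hHc a (hKU ha)) (c / 2) (half_pos hc)
  refine ⟨c / 4, by positivity, min δ ε, lt_min hδ hε, fun ζ hζ z _ hz => ?_⟩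
  have ht := aux_taylor ρ ζ z (c / 2) (min δ ε) (by rwa [norm_sub_rev])
    (fun x hx => hC x (hδU (Metric.mem_thickening_iff.2
      ⟨ζ, hζ, (Metric.mem_ball.1 hx).trans_le (min_le_left _ _)⟩)))
    (fun x hx => by
      have h1 : dist ζ x < ε := by
        rw [dist_comm]; exact (Metric.mem_ball.1 hx).trans_le (min_le_right _ _)
      exact hεb ζ hζ x h1)
  have hp := aux_poly ρ ζ z ((hH ζ (hKU hζ)).differentiableAt (by norm_num))
  have hl := hcb ζ hζ (z - ζ)
  rw [norm_sub_rev ζ z, hp]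
  have := (abs_le.1 ht).1
  nlinarith
end
end
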